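/- (Corollary 1.) Fix d in {(1,1),(0,1),(1,0)} and d' = (0,0), with P(D = d) > 0. Suppose Assumption DID holds for d and for d', P(D = d | X) > 0 and P(D = d' | X) > 0 a.s., and (m_d(X) − m_{d'}(X)) · p_d(X) is integrable. Then the outcome-regression representation identifies the path-dependent ATT: E[p_d(X)]^{-1} · E[(m_d(X) − m_{d'}(X)) · p_d(X)] = τ_{dd'}. -/

import Mathlib

open MeasureTheory Set
open scoped Classical

noncomputable section

namespace DIDMissing

variable {Ω : Type*} {𝓧 : Type*}

/-- Real-valued indicator of a set. -/
def ind (A : Set Ω) : Ω → ℝ := A.indicator fun _ => (1 : ℝ)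

/-- All treatment paths `{0,1}²` (coded as reals). -/
def allPaths : Set (ℝ × ℝ) := {(0, 0), (0, 1), (1, 0), (1, 1)}

/-- The three treated paths `{(1,1), (0,1), (1,0)}`. -/
def threePaths : Set (ℝ × ℝ) := {(1, 1), (0, 1), (1, 0)}

/-- The event `{D = d}` for a treatment path `d = (d₁, d₂)`. -/
def evD (D1 D2 : Ω → ℝ) (d : ℝ × ℝ) : Set Ω := {ω | D1 ω = d.1 ∧ D2 ω = d.2}

/-- The event `{D₂ = b}`. -/
def evD2 (D2 : Ω → ℝ) (b : ℝ) : Set Ω := {ω | D2 ω = b}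

/-- `g` is a (measurable-in-the-covariate) version of the conditional mean `E[Z ∣ A, X]`:
for every bounded measurable `h`, `E[1_A · Z · h(X)] = E[1_A · g(X) · h(X)]`. -/
def IsCondMeanGiven [MeasurableSpace Ω] [MeasurableSpace 𝓧] (P : Measure Ω) (X : Ω → 𝓧)
    (A : Set Ω) (Z : Ω → ℝ) (g : 𝓧 → ℝ) : Prop :=
  Measurable g ∧
    ∀ h : 𝓧 → ℝ, Measurable h → (∃ C, ∀ x, |h x| ≤ C) →
      ∫ ω, ind A ω * Z ω * h (X ω) ∂P = ∫ ω, ind A ω * g (X ω) * h (X ω) ∂P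

/-- Assumption DID for a path `d` relative to `d' = (0,0)`:
(i) no anticipation, `E[Y₀(d) ∣ D = d, X] = E[Y₀(0,0) ∣ D = d, X]` a.s., stated in the
version-free integral form; and (ii) conditional parallel trends, stated as the existence
of a common version of `E[Y₂(0,0) − Y₀(0,0) ∣ X]` and `E[Y₂(0,0) − Y₀(0,0) ∣ D = d, X]`. -/
def DID [MeasurableSpace Ω] [MeasurableSpace 𝓧] (P : Measure Ω) (X : Ω → 𝓧)
    (D1 D2 : Ω → ℝ) (Y0p Y2p : ℝ × ℝ → Ω → ℝ) (d : ℝ × ℝ) : Prop :=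
  (∀ h : 𝓧 → ℝ, Measurable h → (∃ C, ∀ x, |h x| ≤ C) →
      ∫ ω, ind (evD D1 D2 d) ω * Y0p d ω * h (X ω) ∂P
        = ∫ ω, ind (evD D1 D2 d) ω * Y0p (0, 0) ω * h (X ω) ∂P) ∧
  (∃ tr : 𝓧 → ℝ,
      IsCondMeanGiven P X Set.univ (fun ω => Y2p (0, 0) ω - Y0p (0, 0) ω) tr ∧
      IsCondMeanGiven P X (evD D1 D2 d) (fun ω => Y2p (0, 0) ω - Y0p (0, 0) ω) tr)

/-- Assumption MAR: `S ⟂ (D₁, ΔY) ∣ (D₂, X)`, where `q d₂` is a version of the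
missing-data probability `P(S = 1 ∣ D₂ = d₂, X)`, which is `(0,1]`-valued a.s. -/
def MAR [MeasurableSpace Ω] [MeasurableSpace 𝓧] (P : Measure Ω) (X : Ω → 𝓧)
    (D1 D2 S Y0 Y2 : Ω → ℝ) (q : ℝ → 𝓧 → ℝ) : Prop :=
  (∀ d2 ∈ ({0, 1} : Set ℝ), IsCondMeanGiven P X (evD2 D2 d2) S (q d2)) ∧
  (∀ d2 ∈ ({0, 1} : Set ℝ), ∀ᵐ ω ∂P, 0 < q d2 (X ω) ∧ q d2 (X ω) ≤ 1) ∧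
  (∀ d2 ∈ ({0, 1} : Set ℝ), ∀ f : ℝ × ℝ → ℝ, Measurable f → (∃ C, ∀ p, |f p| ≤ C) →
      ∀ h : 𝓧 → ℝ, Measurable h → (∃ C, ∀ x, |h x| ≤ C) →
        ∫ ω, ind (evD2 D2 d2) ω * S ω * f (D1 ω, Y2 ω - Y0 ω) * h (X ω) ∂P
          = ∫ ω, ind (evD2 D2 d2) ω * q d2 (X ω) * f (D1 ω, Y2 ω - Y0 ω) * h (X ω) ∂P)

/-- The path-dependent ATT `τ_{d,(0,0)} = E[Y₂(d) − Y₂(0,0) ∣ D = d]`. -/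
def tau [MeasurableSpace Ω] (P : Measure Ω) (D1 D2 : Ω → ℝ)
    (Y2p : ℝ × ℝ → Ω → ℝ) (d : ℝ × ℝ) : ℝ :=
  (P (evD D1 D2 d)).toReal⁻¹ * ∫ ω in evD D1 D2 d, (Y2p d ω - Y2p (0, 0) ω) ∂P

/-!
On `{D = (0,0)}` the observed change is the untreated change `W = Y₂(0,0) - Y₀(0,0)`, so `m_{d'}`
is a version of `E[W ∣ D = (0,0), X]`. By parallel trends for both paths this is `E[W ∣ X]`, and
hence `E[W ∣ D = d, X]`, wherever `p_{d'} > 0`. By Bayes' rule `p_d` is the density of the law of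
`X` on `{D = d}` with respect to the law of `X`, so weighting by `p_d` is integrating over
`{D = d}`; there `m_d - m_{d'}` has the same integral as `Y₂(d) - Y₀(d) - W`, and no anticipation
cancels the period-0 outcomes.
-/

theorem threePaths_subset_allPaths : threePaths ⊆ allPaths := by
  rintro _ (rfl | rfl | rfl) <;> simp [allPaths]

theorem eqOn_evD_sub {D1 D2 Y0 Y2 : Ω → ℝ} {Y0p Y2p : ℝ × ℝ → Ω → ℝ}
    (hcons0 : ∀ ω, Y0 ω = Y0p (D1 ω, D2 ω) ω) (hcons2 : ∀ ω, Y2 ω = Y2p (D1 ω, D2 ω) ω)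
    (d : ℝ × ℝ) :
    EqOn (fun ω => Y2 ω - Y0 ω) (fun ω => Y2p d ω - Y0p d ω) (evD D1 D2 d) := by
  rintro ω ⟨h1, h2⟩
  simp only [hcons0, hcons2, h1, h2]

section

variable [MeasurableSpace Ω] [m𝓧 : MeasurableSpace 𝓧]

section CondExp

variable {μ : Measure Ω} [IsFiniteMeasure μ] {X : Ω → 𝓧} {Z : Ω → ℝ} {g : 𝓧 → ℝ}

theorem comp_ae_eq_condExp_comap_of_integrable (hX : Measurable X) (hg : Measurable g)
    (hgi : Integrable (fun ω => g (X ω)) μ) (hZ : Integrable Z μ)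
    (h : ∀ B, MeasurableSet B → ∫ ω in X ⁻¹' B, Z ω ∂μ = ∫ ω in X ⁻¹' B, g (X ω) ∂μ) :
    (fun ω => g (X ω)) =ᵐ[μ] μ[Z | m𝓧.comap X] := by
  refine ae_eq_condExp_of_forall_setIntegral_eq hX.comap_le hZ
    (fun s _ _ => hgi.integrableOn) ?_
    (hg.comp (comap_measurable X)).stronglyMeasurable.aestronglyMeasurable
  rintro _ ⟨B, hB, rfl⟩ -
  exact (h B hB).symm

theorem comp_ae_eq_condExp_comap (hX : Measurable X) (hg : Measurable g) (hZ : Integrable Z μ)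
    (h : ∀ B, MeasurableSet B → ∫ ω in X ⁻¹' B, Z ω ∂μ = ∫ ω in X ⁻¹' B, g (X ω) ∂μ) :
    (fun ω => g (X ω)) =ᵐ[μ] μ[Z | m𝓧.comap X] := by
  -- `g ∘ X` is not known to be integrable, so localize to the sets where `|g ∘ X| ≤ n`.
  let T : ℕ → Set 𝓧 := fun n => {x | |g x| ≤ n}
  have hT (n : ℕ) : MeasurableSet (T n) := measurableSet_le hg.abs measurable_const
  have hcover : ⋃ n, X ⁻¹' T n = univ :=
    eq_univ_of_forall fun ω => mem_iUnion.2 (exists_nat_ge |g (X ω)|)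
  have hlocal (n : ℕ) :
      (fun ω => g (X ω)) =ᵐ[μ.restrict (X ⁻¹' T n)] μ[Z | m𝓧.comap X] := by
    have hbound : Integrable (fun ω => g (X ω)) (μ.restrict (X ⁻¹' T n)) :=
      .of_bound (hg.comp hX).aestronglyMeasurable n (ae_restrict_mem (hX (hT n)))
    refine (comp_ae_eq_condExp_comap_of_integrable hX hg hbound hZ.restrict fun B hB => ?_).trans
      (condExp_restrict_ae_eq_restrict hX.comap_le ⟨T n, hT n, rfl⟩ hZ)
    rw [Measure.restrict_restrict (hX hB), ← preimage_inter]
    exact h _ (hB.inter (hT n))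
  have hunion := (ae_restrict_iUnion_iff _ _).2 hlocal
  rwa [hcover, Measure.restrict_univ] at hunion

end CondExp

variable {P : Measure Ω} {X : Ω → 𝓧} {A A' : Set Ω} {Z Z' W : Ω → ℝ} {g g' p p' m : 𝓧 → ℝ}

theorem integral_ind_mul_mul (hA : MeasurableSet A) (f h : Ω → ℝ) :
    ∫ ω, ind A ω * f ω * h ω ∂P = ∫ ω in A, f ω * h ω ∂P := by
  rw [← integral_indicator hA]
  congr 1 with ω
  by_cases hω : ω ∈ A <;> simp [ind, hω]

namespace IsCondMeanGiven

theorem setIntegral_preimage_eq (hg : IsCondMeanGiven P X A Z g) (hX : Measurable X)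
    (hA : MeasurableSet A) {B : Set 𝓧} (hB : MeasurableSet B) :
    ∫ ω in X ⁻¹' B, Z ω ∂P.restrict A = ∫ ω in X ⁻¹' B, g (X ω) ∂P.restrict A := by
  have hmul_indicator (f : Ω → ℝ) : (fun ω => f ω * B.indicator (fun _ => (1 : ℝ)) (X ω)) =
      (X ⁻¹' B).indicator f := by
    ext ω
    by_cases hω : X ω ∈ B <;> simp [hω]
  have htest := hg.2 (B.indicator fun _ => 1) (measurable_const.indicator hB)
    ⟨1, fun x => by by_cases hx : x ∈ B <;> simp [hx]⟩
  rwa [integral_ind_mul_mul hA, integral_ind_mul_mul hA, hmul_indicator, hmul_indicator,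
    integral_indicator (hX hB), integral_indicator (hX hB)] at htest

theorem setIntegral_eq (hg : IsCondMeanGiven P X A Z g) (hX : Measurable X)
    (hA : MeasurableSet A) : ∫ ω in A, Z ω ∂P = ∫ ω in A, g (X ω) ∂P := by
  simpa using hg.setIntegral_preimage_eq hX hA MeasurableSet.univ

theorem ae_eq_condExp [IsFiniteMeasure P] (hg : IsCondMeanGiven P X A Z g) (hX : Measurable X)
    (hA : MeasurableSet A) (hZ : IntegrableOn Z A P) :
    (fun ω => g (X ω)) =ᵐ[P.restrict A] (P.restrict A)[Z | m𝓧.comap X] :=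
  comp_ae_eq_condExp_comap hX hg.1 hZ fun _ => hg.setIntegral_preimage_eq hX hA

theorem integrableOn [IsFiniteMeasure P] (hg : IsCondMeanGiven P X A Z g) (hX : Measurable X)
    (hA : MeasurableSet A) (hZ : IntegrableOn Z A P) : IntegrableOn (fun ω => g (X ω)) A P :=
  integrable_condExp.congr (hg.ae_eq_condExp hX hA hZ).symm

theorem setIntegral_sub_eq [IsFiniteMeasure P] (hg : IsCondMeanGiven P X A Z g)
    (hg' : IsCondMeanGiven P X A Z' g') (hX : Measurable X) (hA : MeasurableSet A)
    (hZ : IntegrableOn Z A P) (hZ' : IntegrableOn Z' A P) :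
    ∫ ω in A, (g (X ω) - g' (X ω)) ∂P = ∫ ω in A, Z ω ∂P - ∫ ω in A, Z' ω ∂P := by
  rw [integral_sub (hg.integrableOn hX hA hZ) (hg'.integrableOn hX hA hZ'),
    hg.setIntegral_eq hX hA, hg'.setIntegral_eq hX hA]

theorem ae_unique [IsFiniteMeasure P] (hg : IsCondMeanGiven P X A Z g)
    (hg' : IsCondMeanGiven P X A Z g') (hX : Measurable X) (hA : MeasurableSet A)
    (hZ : IntegrableOn Z A P) : ∀ᵐ ω ∂P.restrict A, g (X ω) = g' (X ω) :=
  (hg.ae_eq_condExp hX hA hZ).trans (hg'.ae_eq_condExp hX hA hZ).symm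

theorem congr_eqOn (hg : IsCondMeanGiven P X A Z g) (hZ : EqOn Z Z' A) :
    IsCondMeanGiven P X A Z' g := by
  refine ⟨hg.1, fun h hh hb => ?_⟩
  rw [← hg.2 h hh hb]
  congr 1 with ω
  by_cases hω : ω ∈ A
  · rw [hZ hω]
  · simp [ind, hω]

theorem congr_ae (hg : IsCondMeanGiven P X A Z g) (hA : MeasurableSet A) (hg' : Measurable g')
    (heq : ∀ᵐ ω ∂P.restrict A, g (X ω) = g' (X ω)) : IsCondMeanGiven P X A Z g' := by
  refine ⟨hg', fun h hh hb => ?_⟩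
  rw [hg.2 h hh hb, integral_ind_mul_mul hA, integral_ind_mul_mul hA]
  refine integral_congr_ae ?_
  filter_upwards [heq] with ω hω
  rw [hω]

end IsCondMeanGiven

/-- `p` is a version of the propensity score of `A`, i.e. of `x ↦ P(A ∣ X = x)`. -/
def IsPropensityScore (P : Measure Ω) (X : Ω → 𝓧) (A : Set Ω) (p : 𝓧 → ℝ) : Prop :=
  IsCondMeanGiven P X univ (ind A) p

namespace IsPropensityScore

theorem setIntegral_preimage_eq_measureReal (hp : IsPropensityScore P X A p) (hX : Measurable X)
    (hA : MeasurableSet A) {B : Set 𝓧} (hB : MeasurableSet B) :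
    ∫ ω in X ⁻¹' B, p (X ω) ∂P = P.real (X ⁻¹' B ∩ A) := by
  have h := IsCondMeanGiven.setIntegral_preimage_eq hp hX MeasurableSet.univ hB
  rw [Measure.restrict_univ] at h
  rw [← h, ind, setIntegral_indicator hA, setIntegral_const, smul_eq_mul, mul_one]

theorem integral_eq_measureReal (hp : IsPropensityScore P X A p) (hX : Measurable X)
    (hA : MeasurableSet A) : ∫ ω, p (X ω) ∂P = P.real A := by
  simpa using hp.setIntegral_preimage_eq_measureReal hX hA MeasurableSet.univ

variable [IsFiniteMeasure P]

theorem ae_eq_condExp (hp : IsPropensityScore P X A p) (hX : Measurable X)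
    (hA : MeasurableSet A) : (fun ω => p (X ω)) =ᵐ[P] P[ind A | m𝓧.comap X] := by
  have hind : Integrable (ind A) P := (integrable_const 1).indicator hA
  simpa only [Measure.restrict_univ] using
    IsCondMeanGiven.ae_eq_condExp hp hX MeasurableSet.univ hind.integrableOn

theorem ae_nonneg (hp : IsPropensityScore P X A p) (hX : Measurable X)
    (hA : MeasurableSet A) : ∀ᵐ ω ∂P, 0 ≤ p (X ω) := by
  have hind : 0 ≤ ind A := indicator_nonneg fun _ _ => zero_le_one
  filter_upwards [hp.ae_eq_condExp hX hA,
    condExp_nonneg (μ := P) (m := m𝓧.comap X) (.of_forall hind)] with ω heq hnonneg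
  rwa [heq]

theorem integrable (hp : IsPropensityScore P X A p) (hX : Measurable X)
    (hA : MeasurableSet A) : Integrable (fun ω => p (X ω)) P :=
  integrable_condExp.congr (hp.ae_eq_condExp hX hA).symm

theorem map_restrict_eq_withDensity (hp : IsPropensityScore P X A p) (hX : Measurable X)
    (hA : MeasurableSet A) :
    (P.restrict A).map X = (P.map X).withDensity fun x => ENNReal.ofReal (p x) := by
  ext B hB
  rw [Measure.map_apply hX hB, Measure.restrict_apply (hX hB), withDensity_apply _ hB,
    setLIntegral_map hB hp.1.ennreal_ofReal hX,
    ← ofReal_integral_eq_lintegral_ofReal (hp.integrable hX hA).integrableOn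
      (ae_restrict_of_ae (hp.ae_nonneg hX hA)),
    hp.setIntegral_preimage_eq_measureReal hX hA hB, ofReal_measureReal]

theorem integral_mul_eq_setIntegral (hp : IsPropensityScore P X A p) (hX : Measurable X)
    (hA : MeasurableSet A) {f : 𝓧 → ℝ} (hf : Measurable f) :
    ∫ ω, f (X ω) * p (X ω) ∂P = ∫ ω in A, f (X ω) ∂P := by
  symm
  calc ∫ ω in A, f (X ω) ∂P
      = ∫ x, f x ∂(P.restrict A).map X :=
        (integral_map hX.aemeasurable hf.aestronglyMeasurable).symm
    _ = ∫ x, (ENNReal.ofReal (p x)).toReal • f x ∂P.map X := by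
        rw [hp.map_restrict_eq_withDensity hX hA, integral_withDensity_eq_integral_toReal_smul
          hp.1.ennreal_ofReal (.of_forall fun _ => ENNReal.ofReal_lt_top)]
    _ = ∫ ω, (ENNReal.ofReal (p (X ω))).toReal • f (X ω) ∂P :=
        integral_map hX.aemeasurable
          (hp.1.ennreal_ofReal.ennreal_toReal.smul hf).aestronglyMeasurable
    _ = ∫ ω, f (X ω) * p (X ω) ∂P := by
        refine integral_congr_ae ?_
        filter_upwards [hp.ae_nonneg hX hA] with ω hω
        rw [ENNReal.toReal_ofReal hω, smul_eq_mul, mul_comm]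

theorem ae_of_ae_restrict (hp : IsPropensityScore P X A p) (hX : Measurable X)
    (hA : MeasurableSet A) {q : 𝓧 → Prop} (hq : MeasurableSet {x | q x})
    (h : ∀ᵐ ω ∂P.restrict A, q (X ω)) : ∀ᵐ ω ∂P, 0 < p (X ω) → q (X ω) := by
  rw [← ae_map_iff hX.aemeasurable hq, hp.map_restrict_eq_withDensity hX hA,
    ae_withDensity_iff hp.1.ennreal_ofReal] at h
  filter_upwards [ae_of_ae_map hX.aemeasurable h] with ω hω hpos
  exact hω (ENNReal.ofReal_pos.2 hpos).ne'

end IsPropensityScore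

/-- `W` is mean independent of the event `A` given `X`: some `t` is a version of both
`E[W ∣ X]` and `E[W ∣ A, X]`. For `W` the untreated outcome change and `A = {D = d}` these are
the conditional parallel trends in `DID`. -/
def IsCondMeanIndep (P : Measure Ω) (X : Ω → 𝓧) (A : Set Ω) (W : Ω → ℝ) : Prop :=
  ∃ t : 𝓧 → ℝ, IsCondMeanGiven P X univ W t ∧ IsCondMeanGiven P X A W t

theorem IsCondMeanGiven.of_isCondMeanIndep [IsFiniteMeasure P] (hm : IsCondMeanGiven P X A' W m)
    (hWA' : IsCondMeanIndep P X A' W) (hWA : IsCondMeanIndep P X A W)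
    (hp' : IsPropensityScore P X A' p') (hpos : ∀ᵐ ω ∂P.restrict A, 0 < p' (X ω))
    (hX : Measurable X) (hA : MeasurableSet A) (hA' : MeasurableSet A') (hW : Integrable W P) :
    IsCondMeanGiven P X A W m := by
  obtain ⟨t', ht', ht'A'⟩ := hWA'
  obtain ⟨t, ht, htA⟩ := hWA
  have hmt' : ∀ᵐ ω ∂P, 0 < p' (X ω) → m (X ω) = t' (X ω) :=
    hp'.ae_of_ae_restrict hX hA' (measurableSet_eq_fun hm.1 ht'.1)
      (hm.ae_unique ht'A' hX hA' hW.integrableOn)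
  have htt' : ∀ᵐ ω ∂P, t (X ω) = t' (X ω) := by
    simpa only [Measure.restrict_univ] using
      ht.ae_unique ht' hX MeasurableSet.univ hW.integrableOn
  refine htA.congr_ae hA hm.1 ?_
  filter_upwards [ae_restrict_of_ae hmt', ae_restrict_of_ae htt', hpos] with ω hm't htt hω
  rw [htt, hm't hω]

theorem measurableSet_evD {D1 D2 : Ω → ℝ} (hD1 : Measurable D1) (hD2 : Measurable D2)
    (d : ℝ × ℝ) : MeasurableSet (evD D1 D2 d) :=
  (hD1 (measurableSet_singleton d.1)).inter (hD2 (measurableSet_singleton d.2))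

theorem DID.setIntegral_noAnticipation {D1 D2 : Ω → ℝ} {Y0p Y2p : ℝ × ℝ → Ω → ℝ} {d : ℝ × ℝ}
    (h : DID P X D1 D2 Y0p Y2p d) (hA : MeasurableSet (evD D1 D2 d)) :
    ∫ ω in evD D1 D2 d, Y0p d ω ∂P = ∫ ω in evD D1 D2 d, Y0p (0, 0) ω ∂P := by
  have htest := h.1 (fun _ => 1) measurable_const ⟨1, fun _ => abs_one.le⟩
  rw [integral_ind_mul_mul hA, integral_ind_mul_mul hA] at htest
  simpa only [mul_one] using htest

end

theorem statement_7_general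
    [MeasurableSpace Ω] [MeasurableSpace 𝓧] {P : Measure Ω} [IsFiniteMeasure P]
    {X : Ω → 𝓧} (hX : Measurable X) {Y0 Y2 D1 D2 : Ω → ℝ}
    (hD1 : Measurable D1) (hD2 : Measurable D2) {Y0p Y2p : ℝ × ℝ → Ω → ℝ} {d : ℝ × ℝ}
    (hY0d : Integrable (Y0p d) P) (hY0d' : Integrable (Y0p (0, 0)) P)
    (hY2d : Integrable (Y2p d) P) (hY2d' : Integrable (Y2p (0, 0)) P)
    (hcons0 : ∀ ω, Y0 ω = Y0p (D1 ω, D2 ω) ω) (hcons2 : ∀ ω, Y2 ω = Y2p (D1 ω, D2 ω) ω)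
    (_hPd : 0 < P (evD D1 D2 d))
    (hDIDd : DID P X D1 D2 Y0p Y2p d) (hDIDd' : DID P X D1 D2 Y0p Y2p (0, 0))
    {pd pd' : 𝓧 → ℝ} (hpd : IsPropensityScore P X (evD D1 D2 d) pd)
    (hpd' : IsPropensityScore P X (evD D1 D2 (0, 0)) pd')
    (hoverlap : ∀ᵐ ω ∂P.restrict (evD D1 D2 d), 0 < pd' (X ω))
    {md md' : 𝓧 → ℝ} (hmd : IsCondMeanGiven P X (evD D1 D2 d) (fun ω => Y2 ω - Y0 ω) md)
    (hmd' : IsCondMeanGiven P X (evD D1 D2 (0, 0)) (fun ω => Y2 ω - Y0 ω) md') :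
    (∫ ω, pd (X ω) ∂P)⁻¹ * ∫ ω, (md (X ω) - md' (X ω)) * pd (X ω) ∂P
      = tau P D1 D2 Y2p d := by
  have hA := measurableSet_evD hD1 hD2 d
  have hA' := measurableSet_evD hD1 hD2 (0, 0)
  have htreated : IsCondMeanGiven P X (evD D1 D2 d) (fun ω => Y2p d ω - Y0p d ω) md :=
    hmd.congr_eqOn (eqOn_evD_sub hcons0 hcons2 d)
  have hcounterfactual :
      IsCondMeanGiven P X (evD D1 D2 d) (fun ω => Y2p (0, 0) ω - Y0p (0, 0) ω) md' :=
    (hmd'.congr_eqOn (eqOn_evD_sub hcons0 hcons2 (0, 0))).of_isCondMeanIndep hDIDd'.2 hDIDd.2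
      hpd' hoverlap hX hA hA' (hY2d'.sub hY0d')
  have hATT : ∫ ω in evD D1 D2 d, (md (X ω) - md' (X ω)) ∂P
      = ∫ ω in evD D1 D2 d, (Y2p d ω - Y2p (0, 0) ω) ∂P := by
    rw [htreated.setIntegral_sub_eq hcounterfactual hX hA (hY2d.sub hY0d).integrableOn
        (hY2d'.sub hY0d').integrableOn,
      integral_sub hY2d.integrableOn hY0d.integrableOn,
      integral_sub hY2d'.integrableOn hY0d'.integrableOn,
      integral_sub hY2d.integrableOn hY2d'.integrableOn, hDIDd.setIntegral_noAnticipation hA]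
    ring
  have hweight : ∫ ω, (md (X ω) - md' (X ω)) * pd (X ω) ∂P
      = ∫ ω in evD D1 D2 d, (md (X ω) - md' (X ω)) ∂P :=
    hpd.integral_mul_eq_setIntegral hX hA (hmd.1.sub hmd'.1)
  rw [tau, hpd.integral_eq_measureReal hX hA, hweight, hATT, measureReal_def]

/-- Corollary 1: the outcome-regression representation identifies the PDATT. -/
theorem statement_7
    [MeasurableSpace Ω] [m𝓧 : MeasurableSpace 𝓧]
    (P : Measure Ω) [IsProbabilityMeasure P]
    (X : Ω → 𝓧) (hX : Measurable X)
    (Y0 Y2 D1 D2 : Ω → ℝ)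
    (hY0 : Measurable Y0) (hY2 : Measurable Y2)
    (hD1 : Measurable D1) (hD2 : Measurable D2)
    (hY0i : Integrable Y0 P) (hY2i : Integrable Y2 P)
    (hD1v : ∀ ω, D1 ω = 0 ∨ D1 ω = 1) (hD2v : ∀ ω, D2 ω = 0 ∨ D2 ω = 1)
    (Y0p Y2p : ℝ × ℝ → Ω → ℝ)
    (hY0p : ∀ e ∈ allPaths, Measurable (Y0p e) ∧ Integrable (Y0p e) P)
    (hY2p : ∀ e ∈ allPaths, Measurable (Y2p e) ∧ Integrable (Y2p e) P)
    (hcons0 : ∀ ω, Y0 ω = Y0p (D1 ω, D2 ω) ω)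
    (hcons2 : ∀ ω, Y2 ω = Y2p (D1 ω, D2 ω) ω)
    (d : ℝ × ℝ) (hd : d ∈ threePaths) (hPd : 0 < P (evD D1 D2 d))
    (hDIDd : DID P X D1 D2 Y0p Y2p d) (hDIDd' : DID P X D1 D2 Y0p Y2p (0, 0))
    (pd pd' : 𝓧 → ℝ)
    (hpd : IsCondMeanGiven P X Set.univ (ind (evD D1 D2 d)) pd)
    (hpd' : IsCondMeanGiven P X Set.univ (ind (evD D1 D2 (0, 0))) pd')
    (hpdpos : ∀ᵐ ω ∂P, 0 < pd (X ω)) (hpd'pos : ∀ᵐ ω ∂P, 0 < pd' (X ω))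
    (md md' : 𝓧 → ℝ)
    (hmd : IsCondMeanGiven P X (evD D1 D2 d) (fun ω => Y2 ω - Y0 ω) md)
    (hmd' : IsCondMeanGiven P X (evD D1 D2 (0, 0)) (fun ω => Y2 ω - Y0 ω) md')
    (hpdi : Integrable (fun ω => pd (X ω)) P)
    (hfin : Integrable (fun ω => (md (X ω) - md' (X ω)) * pd (X ω)) P) :
    (∫ ω, pd (X ω) ∂P)⁻¹ * ∫ ω, (md (X ω) - md' (X ω)) * pd (X ω) ∂P
      = tau P D1 D2 Y2p d := by
  have hd' := threePaths_subset_allPaths hd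
  have h0 : ((0, 0) : ℝ × ℝ) ∈ allPaths := mem_insert _ _
  exact statement_7_general hX hD1 hD2 (hY0p d hd').2 (hY0p _ h0).2 (hY2p d hd').2
    (hY2p _ h0).2 hcons0 hcons2 hPd hDIDd hDIDd' hpd hpd' (ae_restrict_of_ae hpd'pos) hmd hmd'

end DIDMissing
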